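/- Fix a positive integer k and let ℍ_k = {(z₁,z₂) ∈ ℂ² : |z₁|^k < |z₂| < 1}. Define 𝒫(z,w) = z₂·conj(w₂) / ((1 - z₂·conj(w₂))² · (z₂·conj(w₂) - (z₁·conj(w₁))^k)²). Then there is a constant C > 0 such that for all w ∈ ℍ_k, ∫_{ℍ_k} |𝒫(z,w)|² dV(z) ≤ C · |w₂|^{-2} (1 - |w₂|²)^{-2} (1 - |w₁|^{2k}/|w₂|²)^{-2}. -/

import Mathlib

open Complex ComplexConjugate MeasureTheory

/-- The fat Hartogs triangle `ℍ_k = {(z₁,z₂) : |z₁|^k < |z₂| < 1}`. -/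
def hartogsTriangle (k : ℕ) : Set (ℂ × ℂ) :=
  {z | ‖z.1‖ ^ k < ‖z.2‖ ∧ ‖z.2‖ < 1}

/-- The kernel `𝒫(z,w) = t / ((1-t)² (t - s^k)²)`, `s = z₁·conj w₁`, `t = z₂·conj w₂`. -/
noncomputable def Pker (k : ℕ) (z w : ℂ × ℂ) : ℂ :=
  z.2 * conj w.2 /
    ((1 - z.2 * conj w.2) ^ 2 * (z.2 * conj w.2 - (z.1 * conj w.1) ^ k) ^ 2)

/-!
Writing `t - s ^ k = t * (1 - s ^ k / t)`, the squared kernel restricted to a slice `z₂ = y` is a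
constant times `|1 - c z₁ ^ k|⁻⁴`. A Forelli–Rudin type estimate for
`∫_{|z| < R} |z| ^ (α - 2) |1 - c z ^ m| ^ (-(n + 2))` is therefore applied twice: first in `z₁` on
the disc of radius `R = |y| ^ (1 / k)`, with `α = 2` and `m = k`, where `R ^ 2` combines with the
factor `|y|⁻²` to give the weight `|y| ^ (2 / k - 2)`; then in `z₂` on the unit disc, with
`α = 2 / k` and `m = 1`.

For the disc estimate, let `f` be holomorphic with `f 0 = 0` and `|f| ≤ q < 1` on the disc of
radius `r`. On its boundary, `|1 - f| ^ (-(n + 2))` is at most `2 ^ n (1 - q ^ 2) ^ (-(n + 1))`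
times the Poisson kernel evaluated at `f`, a harmonic function whose mean over the circle is its
value `1` at the centre. The radial integrand that remains is dominated by the derivative of
`α⁻¹ r ^ α (1 - y r ^ p) ^ (-n)`, as long as `α ≤ n p`.
-/

open Metric Set
open scoped Real

lemma lintegral_Ioo_ofReal_deriv_eq {G G' : ℝ → ℝ} {a b : ℝ} (hab : a ≤ b)
    (hcont : ContinuousOn G (Icc a b)) (hderiv : ∀ x ∈ Ioo a b, HasDerivAt G (G' x) x)
    (hnonneg : ∀ x ∈ Ioo a b, 0 ≤ G' x) :
    ∫⁻ x in Ioo a b, ENNReal.ofReal (G' x) = ENNReal.ofReal (G b - G a) := by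
  have hint : IntegrableOn G' (Ioc a b) :=
    intervalIntegral.integrableOn_deriv_of_nonneg hcont hderiv hnonneg
  rw [← ofReal_integral_eq_lintegral_ofReal (hint.mono_set Ioo_subset_Ioc_self)
      (ae_restrict_of_forall_mem measurableSet_Ioo hnonneg),
    ← integral_Ioc_eq_integral_Ioo, ← intervalIntegral.integral_of_le hab,
    intervalIntegral.integral_eq_sub_of_hasDerivAt_of_le hab hcont hderiv
      ((intervalIntegrable_iff_integrableOn_Ioc_of_le hab).2 hint)]

lemma hasDerivAt_rpow_mul_inv_one_sub_pow (n p : ℕ) {α y r : ℝ} (hα : α ≠ 0) (hr : r ≠ 0)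
    (hyr : 1 - y * r ^ p ≠ 0) :
    HasDerivAt (fun r : ℝ ↦ α⁻¹ * r ^ α * ((1 - y * r ^ p) ^ n)⁻¹)
      ((1 + (n * p / α - 1) * (y * r ^ p)) * (r ^ (α - 1) * ((1 - y * r ^ p) ^ (n + 1))⁻¹)) r := by
  have hbase : HasDerivAt (fun r : ℝ ↦ 1 - y * r ^ p) (-(y * (p * r ^ (p - 1)))) r :=
    ((hasDerivAt_pow p r).const_mul y).const_sub 1
  have hinv : HasDerivAt (fun r : ℝ ↦ ((1 - y * r ^ p) ^ n)⁻¹)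
      (n * (y * (p * r ^ (p - 1))) * ((1 - y * r ^ p) ^ (n + 1))⁻¹) r := by
    refine ((hbase.fun_pow n).fun_inv (pow_ne_zero n hyr)).congr_deriv ?_
    rcases n with _ | n
    · simp
    · rw [Nat.add_sub_cancel]
      field_simp
      ring
  have hrpow : r ^ α = r ^ (α - 1) * r := by rw [← Real.rpow_add_one hr, sub_add_cancel]
  have hpow : p * r ^ p = p * r ^ (p - 1) * r := by
    cases p <;> simp [pow_succ, mul_assoc]
  refine (((Real.hasDerivAt_rpow_const (.inl hr)).const_mul α⁻¹).fun_mul hinv).congr_deriv ?_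
  rw [hrpow]
  field_simp
  linear_combination (-n * y * r ^ (α - 1) * (1 - y * r ^ p) ^ n) * hpow

lemma lintegral_Ioo_rpow_mul_inv_one_sub_pow_le {n p : ℕ} {α y R : ℝ} (hα : 0 < α)
    (hαnp : α ≤ n * p) (hy : 0 ≤ y) (hR : 0 ≤ R) (hyR : y * R ^ p < 1) :
    ∫⁻ r in Ioo 0 R, ENNReal.ofReal (r ^ (α - 1) * ((1 - y * r ^ p) ^ (n + 1))⁻¹) ≤
      ENNReal.ofReal (α⁻¹ * R ^ α * ((1 - y * R ^ p) ^ n)⁻¹) := by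
  have hpos : ∀ r ∈ Icc 0 R, 0 < 1 - y * r ^ p := fun r ⟨hr0, hrR⟩ ↦ by
    have : y * r ^ p ≤ y * R ^ p := by gcongr
    linarith
  have hcont : ContinuousOn (fun r : ℝ ↦ α⁻¹ * r ^ α * ((1 - y * r ^ p) ^ n)⁻¹) (Icc 0 R) :=
    (continuous_const.mul (Real.continuous_rpow_const hα.le)).continuousOn.mul
      (ContinuousOn.inv₀ (by fun_prop) fun r hr ↦ pow_ne_zero _ (hpos r hr).ne')
  have hderiv : ∀ r ∈ Ioo 0 R, HasDerivAt (fun r : ℝ ↦ α⁻¹ * r ^ α * ((1 - y * r ^ p) ^ n)⁻¹)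
      ((1 + (n * p / α - 1) * (y * r ^ p)) * (r ^ (α - 1) * ((1 - y * r ^ p) ^ (n + 1))⁻¹)) r :=
    fun r hr ↦ hasDerivAt_rpow_mul_inv_one_sub_pow n p hα.ne' hr.1.ne'
      (hpos r (Ioo_subset_Icc_self hr)).ne'
  have hintegrand : ∀ r ∈ Ioo 0 R, 0 ≤ r ^ (α - 1) * ((1 - y * r ^ p) ^ (n + 1))⁻¹ :=
    fun r hr ↦ by
      have := hpos r (Ioo_subset_Icc_self hr)
      have := hr.1
      positivity
  have hfactor : ∀ r ∈ Ioo 0 R, 1 ≤ 1 + (n * p / α - 1) * (y * r ^ p) := fun r hr ↦ by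
    have hcoef : 0 ≤ n * p / α - 1 := by rwa [sub_nonneg, one_le_div hα]
    have := hr.1
    exact le_add_of_nonneg_right (by positivity)
  calc _ ≤ ∫⁻ r in Ioo 0 R, ENNReal.ofReal ((1 + (n * p / α - 1) * (y * r ^ p)) *
          (r ^ (α - 1) * ((1 - y * r ^ p) ^ (n + 1))⁻¹)) :=
        setLIntegral_mono' measurableSet_Ioo fun r hr ↦
          ENNReal.ofReal_le_ofReal (le_mul_of_one_le_left (hintegrand r hr) (hfactor r hr))
    _ = _ := by
        rw [lintegral_Ioo_ofReal_deriv_eq hR hcont hderiv fun r hr ↦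
          mul_nonneg (zero_le_one.trans (hfactor r hr)) (hintegrand r hr)]
        simp [Real.zero_rpow hα.ne']

lemma circleAverage_poissonKernel_comp {f : ℂ → ℂ} {c : ℂ} {r : ℝ}
    (hf : DifferentiableOn ℂ f (closedBall c |r|)) (hf1 : ∀ z ∈ closedBall c |r|, ‖f z‖ < 1) :
    Real.circleAverage (fun z ↦ poissonKernel 0 (f z) 1) c r = poissonKernel 0 (f c) 1 := by
  have hne : ∀ z ∈ closedBall c |r|, 1 - f z ≠ 0 := fun z hz ↦
    (isUnit_one_sub_of_norm_lt_one (hf1 z hz)).ne_zero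
  have hherglotz : DifferentiableOn ℂ (fun z ↦ herglotzRieszKernel 0 (f z) 1)
      (closedBall c |r|) := by
    simpa only [herglotzRieszKernel_def, sub_zero] using
      (hf.const_add 1).fun_div (hf.const_sub 1) hne
  have hci : CircleIntegrable (fun z ↦ herglotzRieszKernel 0 (f z) 1) c r :=
    (hherglotz.continuousOn.mono sphere_subset_closedBall).circleIntegrable'
  simp only [poissonKernel_eq_re_herglotzRieszKernel, Function.comp_apply]
  rw [← (hherglotz.mono closure_ball_subset_closedBall).diffContOnCl.circleAverage]
  exact reCLM.circleAverage_comp_comm hci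

lemma inv_norm_one_sub_pow_le_poissonKernel (n : ℕ) {x : ℂ} {q : ℝ} (hx : ‖x‖ ≤ q) (hq : q < 1) :
    (‖1 - x‖ ^ (n + 2))⁻¹ ≤ 2 ^ n * ((1 - q ^ 2) ^ (n + 1))⁻¹ * poissonKernel 0 x 1 := by
  have hq0 : 0 ≤ q := (norm_nonneg x).trans hx
  have hdist : 1 - q ≤ ‖1 - x‖ := by
    have := norm_sub_norm_le 1 x
    rw [norm_one] at this
    linarith
  have hdist_pos : 0 < ‖1 - x‖ := by linarith
  have hq2 : 0 < 1 - q ^ 2 := by nlinarith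
  have hratio : 1 ≤ 2 * ‖1 - x‖ / (1 - q ^ 2) := by
    rw [one_le_div hq2]
    nlinarith
  have hxq : ‖x‖ ^ 2 ≤ q ^ 2 := by gcongr
  calc (‖1 - x‖ ^ (n + 2))⁻¹
      ≤ (2 * ‖1 - x‖ / (1 - q ^ 2)) ^ n * (‖1 - x‖ ^ (n + 2))⁻¹ :=
        le_mul_of_one_le_left (by positivity) (one_le_pow₀ hratio)
    _ = 2 ^ n * ((1 - q ^ 2) ^ (n + 1))⁻¹ * ((1 - q ^ 2) / ‖1 - x‖ ^ 2) := by
        rw [div_pow, mul_pow]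
        field_simp
        ring
    _ ≤ 2 ^ n * ((1 - q ^ 2) ^ (n + 1))⁻¹ * poissonKernel 0 x 1 := by
        simp only [poissonKernel_def, sub_zero, norm_one, one_pow]
        gcongr

lemma lintegral_circleMap_ofReal_eq {g : ℂ → ℝ} {c : ℂ} {r : ℝ} (hg : CircleIntegrable g c r)
    (hg0 : ∀ z ∈ sphere c |r|, 0 ≤ g z) :
    ∫⁻ θ in Ioo (-π) π, ENNReal.ofReal (g (circleMap c r θ)) =
      ENNReal.ofReal (2 * π * Real.circleAverage g c r) := by
  have hperiodic : (fun θ ↦ g (circleMap c r θ)).Periodic (2 * π) := fun θ ↦ by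
    simp only [periodic_circleMap c r θ]
  have hint : IntervalIntegrable (fun θ ↦ g (circleMap c r θ)) volume (-π) π :=
    hperiodic.intervalIntegrable₀ Real.two_pi_pos.ne' hg _ _
  have hpi : -π ≤ π := by linarith [Real.pi_pos]
  have hshift := hperiodic.intervalIntegral_add_eq (-π) 0
  rw [show -π + 2 * π = π by ring, zero_add] at hshift
  rw [← ofReal_integral_eq_lintegral_ofReal
      (((intervalIntegrable_iff_integrableOn_Ioc_of_le hpi).1 hint).mono_set Ioo_subset_Ioc_self)
      (.of_forall fun θ ↦ hg0 _ (circleMap_mem_sphere' c r θ)),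
    ← integral_Ioc_eq_integral_Ioo, ← intervalIntegral.integral_of_le hpi, hshift,
    Real.circleAverage_def, smul_eq_mul, mul_inv_cancel_left₀ Real.two_pi_pos.ne']

lemma lintegral_circleMap_inv_norm_one_sub_pow_le (n : ℕ) {f : ℂ → ℂ} {c : ℂ} {r q : ℝ}
    (hf : DifferentiableOn ℂ f (closedBall c |r|)) (hfc : f c = 0)
    (hfq : ∀ z ∈ closedBall c |r|, ‖f z‖ ≤ q) (hq : q < 1) :
    ∫⁻ θ in Ioo (-π) π, ENNReal.ofReal ((‖1 - f (circleMap c r θ)‖ ^ (n + 2))⁻¹) ≤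
      ENNReal.ofReal (2 * π * (2 ^ n * ((1 - q ^ 2) ^ (n + 1))⁻¹)) := by
  have hbound : ∀ z ∈ sphere c |r|, (‖1 - f z‖ ^ (n + 2))⁻¹ ≤
      2 ^ n * ((1 - q ^ 2) ^ (n + 1))⁻¹ * poissonKernel 0 (f z) 1 := fun z hz ↦
    inv_norm_one_sub_pow_le_poissonKernel n (hfq z (sphere_subset_closedBall hz)) hq
  have hne : ∀ z ∈ sphere c |r|, ‖1 - f z‖ ≠ 0 := fun z hz ↦ norm_ne_zero_iff.2
    (isUnit_one_sub_of_norm_lt_one ((hfq z (sphere_subset_closedBall hz)).trans_lt hq)).ne_zero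
  have hcont : ContinuousOn f (sphere c |r|) := hf.continuousOn.mono sphere_subset_closedBall
  have hci : CircleIntegrable (fun z ↦ 2 ^ n * ((1 - q ^ 2) ^ (n + 1))⁻¹ *
      poissonKernel 0 (f z) 1) c r := by
    simp only [poissonKernel_def, sub_zero]
    exact ContinuousOn.circleIntegrable' <| continuousOn_const.mul <|
      ContinuousOn.div (by fun_prop) (by fun_prop) fun z hz ↦ pow_ne_zero _ (hne z hz)
  have haverage : Real.circleAverage (fun z ↦ 2 ^ n * ((1 - q ^ 2) ^ (n + 1))⁻¹ *
      poissonKernel 0 (f z) 1) c r = 2 ^ n * ((1 - q ^ 2) ^ (n + 1))⁻¹ := by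
    simp only [← smul_eq_mul]
    rw [Real.circleAverage_fun_smul,
      circleAverage_poissonKernel_comp hf fun z hz ↦ (hfq z hz).trans_lt hq, hfc]
    simp [poissonKernel_def]
  calc _ ≤ ∫⁻ θ in Ioo (-π) π, ENNReal.ofReal (2 ^ n * ((1 - q ^ 2) ^ (n + 1))⁻¹ *
          poissonKernel 0 (f (circleMap c r θ)) 1) :=
        lintegral_mono fun θ ↦ ENNReal.ofReal_le_ofReal (hbound _ (circleMap_mem_sphere' c r θ))
    _ = _ := by
        rw [lintegral_circleMap_ofReal_eq hci fun z hz ↦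
          (by positivity : 0 ≤ (‖1 - f z‖ ^ (n + 2))⁻¹).trans (hbound z hz), haverage]

lemma setLIntegral_ball_eq_lintegral_circleMap {f : ℂ → ENNReal} (hf : Measurable f) (R : ℝ) :
    ∫⁻ z in ball 0 R, f z =
      ∫⁻ r in Ioo 0 R, ENNReal.ofReal r * ∫⁻ θ in Ioo (-π) π, f (circleMap 0 r θ) := by
  have hpolar (p : ℝ × ℝ) : Complex.polarCoord.symm p = circleMap 0 p.1 p.2 := by
    simp [circleMap, exp_mul_I]
  have hmem {r : ℝ} (hr : r ∈ Ioi 0) (θ : ℝ) : circleMap 0 r θ ∈ ball 0 R ↔ r ∈ Iio R := by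
    simp [abs_of_pos (mem_Ioi.1 hr)]
  have hmeas : Measurable fun p : ℝ × ℝ ↦
      ENNReal.ofReal p.1 • (ball 0 R).indicator f (circleMap 0 p.1 p.2) :=
    (by fun_prop : Measurable fun p : ℝ × ℝ ↦ ENNReal.ofReal p.1).mul <|
      (hf.indicator measurableSet_ball).comp
        (by fun_prop : Continuous fun p : ℝ × ℝ ↦ circleMap 0 p.1 p.2).measurable
  have hslice : ∀ r ∈ Ioi (0 : ℝ),
      ∫⁻ θ in Ioo (-π) π, ENNReal.ofReal r • (ball 0 R).indicator f (circleMap 0 r θ) =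
        (Iio R).indicator
          (fun r ↦ ENNReal.ofReal r * ∫⁻ θ in Ioo (-π) π, f (circleMap 0 r θ)) r := fun r hr ↦ by
    by_cases hrR : r ∈ Iio R
    · simp [indicator_of_mem, hmem hr, hrR, lintegral_const_mul']
    · simp [indicator_of_notMem, hmem hr, hrR]
  rw [← lintegral_indicator measurableSet_ball, ← Complex.lintegral_comp_polarCoord_symm,
    polarCoord_target, Measure.volume_eq_prod]
  simp_rw [hpolar]
  rw [setLIntegral_prod _ hmeas.aemeasurable, setLIntegral_congr_fun measurableSet_Ioi hslice,
    setLIntegral_indicator measurableSet_Iio, inter_comm, Ioi_inter_Iio]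

lemma lintegral_circleMap_inv_norm_one_sub_mul_pow_le (n : ℕ) {m : ℕ} {c : ℂ} {r : ℝ}
    (hm : m ≠ 0) (hr : 0 ≤ r) (hcr : ‖c‖ * r ^ m < 1) :
    ∫⁻ θ in Ioo (-π) π, ENNReal.ofReal ((‖1 - c * circleMap 0 r θ ^ m‖ ^ (n + 2))⁻¹) ≤
      ENNReal.ofReal (2 * π * (2 ^ n * ((1 - (‖c‖ * r ^ m) ^ 2) ^ (n + 1))⁻¹)) := by
  refine lintegral_circleMap_inv_norm_one_sub_pow_le (f := fun z ↦ c * z ^ m) n (by fun_prop)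
    (by simp [hm]) (fun z hz ↦ ?_) hcr
  rw [mem_closedBall_zero_iff, abs_of_nonneg hr] at hz
  rw [norm_mul, norm_pow]
  gcongr

lemma setLIntegral_ball_rpow_mul_inv_norm_one_sub_pow_le {n m : ℕ} {c : ℂ} {α R : ℝ}
    (hα : 0 < α) (hαmn : α ≤ n * (2 * m)) (hR : 0 ≤ R) (hcR : ‖c‖ * R ^ m < 1) :
    ∫⁻ z in ball 0 R, ENNReal.ofReal (‖z‖ ^ (α - 2) * (‖1 - c * z ^ m‖ ^ (n + 2))⁻¹) ≤
      ENNReal.ofReal (2 * π * 2 ^ n * α⁻¹ * R ^ α * ((1 - (‖c‖ * R ^ m) ^ 2) ^ n)⁻¹) := by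
  have hm : m ≠ 0 := by
    rintro rfl
    norm_num at hαmn
    linarith
  have hnorm_sq (r : ℝ) : (‖c‖ * r ^ m) ^ 2 = ‖c‖ ^ 2 * r ^ (2 * m) := by ring
  have hcircle : ∀ r ∈ Ioo 0 R, ENNReal.ofReal r * ∫⁻ θ in Ioo (-π) π, ENNReal.ofReal
        (‖circleMap 0 r θ‖ ^ (α - 2) * (‖1 - c * circleMap 0 r θ ^ m‖ ^ (n + 2))⁻¹) ≤
      ENNReal.ofReal (2 * π * 2 ^ n) *
        ENNReal.ofReal (r ^ (α - 1) * ((1 - ‖c‖ ^ 2 * r ^ (2 * m)) ^ (n + 1))⁻¹) := by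
    rintro r ⟨hr, hrR⟩
    have hcr : ‖c‖ * r ^ m < 1 := lt_of_le_of_lt (by gcongr) hcR
    have hrpow : r ^ (α - 1) = r * r ^ (α - 2) := by
      rw [mul_comm, ← Real.rpow_add_one hr.ne']
      ring_nf
    simp only [norm_circleMap_zero, abs_of_pos hr,
      ENNReal.ofReal_mul (p := r ^ (α - 2)) (by positivity)]
    rw [lintegral_const_mul' _ _ ENNReal.ofReal_ne_top]
    grw [lintegral_circleMap_inv_norm_one_sub_mul_pow_le n hm hr.le hcr]
    rw [← ENNReal.ofReal_mul (by positivity), ← ENNReal.ofReal_mul hr.le,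
      ← ENNReal.ofReal_mul (by positivity : 0 ≤ 2 * π * 2 ^ n), hrpow, hnorm_sq]
    exact (congrArg ENNReal.ofReal (by ring)).le
  have hcR' : ‖c‖ ^ 2 * R ^ (2 * m) < 1 := by
    rw [← hnorm_sq]
    exact pow_lt_one₀ (by positivity) hcR two_ne_zero
  rw [setLIntegral_ball_eq_lintegral_circleMap (by fun_prop)]
  grw [setLIntegral_mono' measurableSet_Ioo hcircle,
    lintegral_const_mul' _ _ ENNReal.ofReal_ne_top,
    lintegral_Ioo_rpow_mul_inv_one_sub_pow_le hα (by exact_mod_cast hαmn) (by positivity) hR hcR',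
    ← ENNReal.ofReal_mul (by positivity), hnorm_sq]
  exact (congrArg ENNReal.ofReal (by ring)).le

lemma setLIntegral_ball_inv_norm_one_sub_pow_le {n m : ℕ} {c : ℂ} {R : ℝ} (hn : n ≠ 0)
    (hm : m ≠ 0) (hR : 0 ≤ R) (hcR : ‖c‖ * R ^ m < 1) :
    ∫⁻ z in ball 0 R, ENNReal.ofReal ((‖1 - c * z ^ m‖ ^ (n + 2))⁻¹) ≤
      ENNReal.ofReal (2 ^ n * π * R ^ 2 * ((1 - (‖c‖ * R ^ m) ^ 2) ^ n)⁻¹) := by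
  have hnm : (1 : ℝ) ≤ n * m := by
    exact_mod_cast Nat.one_le_iff_ne_zero.2 (mul_ne_zero hn hm)
  have hdisc := setLIntegral_ball_rpow_mul_inv_norm_one_sub_pow_le (n := n) (m := m) two_pos
    (by linarith) hR hcR
  simp only [sub_self, Real.rpow_zero, one_mul, Real.rpow_two] at hdisc
  exact hdisc.trans_eq (congrArg ENNReal.ofReal (by ring))

lemma measurableSet_hartogsTriangle (k : ℕ) : MeasurableSet (hartogsTriangle k) :=
  (measurableSet_lt (measurable_fst.norm.pow_const k) measurable_snd.norm).inter
    (measurableSet_lt measurable_snd.norm measurable_const)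

lemma mem_hartogsTriangle_iff_mem_ball {k : ℕ} (hk : k ≠ 0) {z : ℂ × ℂ} :
    z ∈ hartogsTriangle k ↔ z.2 ∈ ball 0 1 ∧ z.1 ∈ ball 0 (‖z.2‖ ^ (k⁻¹ : ℝ)) := by
  simp only [hartogsTriangle, mem_ofPred_eq, mem_ball_zero_iff]
  rw [and_comm, Real.lt_rpow_inv_iff_of_pos (norm_nonneg _) (norm_nonneg _) (by positivity),
    Real.rpow_natCast]

lemma setLIntegral_hartogsTriangle {k : ℕ} (hk : k ≠ 0) {f : ℂ × ℂ → ENNReal} (hf : Measurable f) :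
    ∫⁻ z in hartogsTriangle k, f z =
      ∫⁻ y in ball (0 : ℂ) 1, ∫⁻ x in ball (0 : ℂ) (‖y‖ ^ (k⁻¹ : ℝ)), f (x, y) := by
  classical
  have hslice (y : ℂ) : ∫⁻ x, (hartogsTriangle k).indicator f (x, y) =
      (ball 0 1).indicator
        (fun y ↦ ∫⁻ x in ball (0 : ℂ) (‖y‖ ^ (k⁻¹ : ℝ)), f (x, y)) y := by
    by_cases hy : y ∈ ball (0 : ℂ) 1
    · rw [indicator_of_mem hy, ← lintegral_indicator measurableSet_ball]
      refine lintegral_congr fun x ↦ ?_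
      simp only [indicator_apply, mem_hartogsTriangle_iff_mem_ball hk, hy, true_and]
    · simp only [indicator_apply, mem_hartogsTriangle_iff_mem_ball hk, hy, false_and, if_false,
        lintegral_zero]
  have hH := measurableSet_hartogsTriangle k
  rw [← lintegral_indicator hH, Measure.volume_eq_prod,
    lintegral_prod_symm' _ (hf.indicator hH), lintegral_congr hslice,
    lintegral_indicator measurableSet_ball]

lemma norm_Pker_sq (k : ℕ) {z w : ℂ × ℂ} (hz : z.2 ≠ 0) (hw : w.2 ≠ 0) :
    ‖Pker k z w‖ ^ 2 = (‖w.2‖ ^ 2)⁻¹ * (‖z.2‖ ^ 2)⁻¹ * (‖1 - conj w.2 * z.2‖ ^ 4)⁻¹ *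
      (‖1 - conj w.1 ^ k / (z.2 * conj w.2) * z.1 ^ k‖ ^ 4)⁻¹ := by
  have hw' : conj w.2 ≠ 0 := (map_ne_zero _).2 hw
  have hfactor : z.2 * conj w.2 - (z.1 * conj w.1) ^ k =
      (z.2 * conj w.2) * (1 - conj w.1 ^ k / (z.2 * conj w.2) * z.1 ^ k) := by
    field_simp
    ring
  rw [Pker, hfactor, mul_comm (conj w.2)]
  simp only [norm_div, norm_mul, norm_pow, RCLike.norm_conj]
  have hz_norm : ‖z.2‖ ≠ 0 := norm_ne_zero_iff.2 hz
  have hw_norm : ‖w.2‖ ≠ 0 := norm_ne_zero_iff.2 hw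
  field_simp

lemma measurable_Pker (k : ℕ) (w : ℂ × ℂ) : Measurable fun z ↦ Pker k z w := by
  unfold Pker
  fun_prop

lemma setLIntegral_norm_Pker_sq_slice_le {k : ℕ} (hk : k ≠ 0) {w : ℂ × ℂ}
    (hw : ‖w.1‖ ^ k < ‖w.2‖) (y : ℂ) :
    ∫⁻ x in ball (0 : ℂ) (‖y‖ ^ (k⁻¹ : ℝ)), ENNReal.ofReal (‖Pker k (x, y) w‖ ^ 2) ≤
      ENNReal.ofReal (4 * π * (‖w.2‖ ^ 2)⁻¹ * ((1 - ‖w.1‖ ^ (2 * k) / ‖w.2‖ ^ 2) ^ 2)⁻¹) *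
        ENNReal.ofReal (‖y‖ ^ (2 / k - 2 : ℝ) * (‖1 - conj w.2 * y‖ ^ 4)⁻¹) := by
  rcases eq_or_ne y 0 with rfl | hy
  · simp [Pker]
  have hy' : 0 < ‖y‖ := norm_pos_iff.2 hy
  have hw2 : 0 < ‖w.2‖ := (by positivity : 0 ≤ ‖w.1‖ ^ k).trans_lt hw
  set c : ℂ := conj w.1 ^ k / (y * conj w.2) with hc
  set R : ℝ := ‖y‖ ^ (k⁻¹ : ℝ)
  have hR2 : R ^ 2 = ‖y‖ ^ (2 / k - 2 : ℝ) * ‖y‖ ^ 2 := by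
    rw [← Real.rpow_mul_natCast hy'.le, ← Real.rpow_add_natCast hy'.ne']
    congr 1
    push_cast
    ring
  have hcR : ‖c‖ * R ^ k = ‖w.1‖ ^ k / ‖w.2‖ := by
    rw [Real.rpow_inv_natCast_pow hy'.le hk, hc, norm_div, norm_mul, norm_pow, RCLike.norm_conj,
      RCLike.norm_conj]
    field_simp
  have hcR1 : ‖c‖ * R ^ k < 1 := by rwa [hcR, div_lt_one hw2]
  have hfactor (x : ℂ) : ENNReal.ofReal (‖Pker k (x, y) w‖ ^ 2) =
      ENNReal.ofReal ((‖w.2‖ ^ 2)⁻¹ * (‖y‖ ^ 2)⁻¹ * (‖1 - conj w.2 * y‖ ^ 4)⁻¹) *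
        ENNReal.ofReal ((‖1 - c * x ^ k‖ ^ 4)⁻¹) := by
    rw [← ENNReal.ofReal_mul (by positivity), norm_Pker_sq k hy (norm_pos_iff.1 hw2)]
  simp only [hfactor]
  rw [lintegral_const_mul' _ _ ENNReal.ofReal_ne_top]
  grw [setLIntegral_ball_inv_norm_one_sub_pow_le two_ne_zero hk (by positivity) hcR1]
  rw [← ENNReal.ofReal_mul (by positivity), ← ENNReal.ofReal_mul (by positivity), hR2, hcR,
    mul_comm 2 k, pow_mul]
  refine (congrArg ENNReal.ofReal ?_).le
  field_simp
  norm_num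

lemma setLIntegral_hartogsTriangle_norm_Pker_sq_le {k : ℕ} (hk : k ≠ 0) {w : ℂ × ℂ}
    (hw : w ∈ hartogsTriangle k) :
    ∫⁻ z in hartogsTriangle k, ENNReal.ofReal (‖Pker k z w‖ ^ 2) ≤
      ENNReal.ofReal (16 * π ^ 2 * k * (‖w.2‖ ^ 2)⁻¹ * ((1 - ‖w.2‖ ^ 2) ^ 2)⁻¹ *
        ((1 - ‖w.1‖ ^ (2 * k) / ‖w.2‖ ^ 2) ^ 2)⁻¹) := by
  have hdisc : ∫⁻ y in ball (0 : ℂ) 1,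
      ENNReal.ofReal (‖y‖ ^ (2 / k - 2 : ℝ) * (‖1 - conj w.2 * y‖ ^ 4)⁻¹) ≤
        ENNReal.ofReal (4 * π * k * ((1 - ‖w.2‖ ^ 2) ^ 2)⁻¹) := by
    have hk1 : (1 : ℝ) ≤ k := by exact_mod_cast Nat.one_le_iff_ne_zero.2 hk
    have hα : (2 / k : ℝ) ≤ (2 : ℕ) * (2 * (1 : ℕ)) := by
      rw [div_le_iff₀ (by positivity)]
      push_cast
      linarith
    have h := setLIntegral_ball_rpow_mul_inv_norm_one_sub_pow_le (by positivity) hα zero_le_one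
      (by simpa using hw.2 : ‖conj w.2‖ * 1 ^ 1 < 1)
    simp only [pow_one, Real.one_rpow, mul_one, RCLike.norm_conj, inv_div] at h
    exact h.trans_eq (congrArg ENNReal.ofReal (by ring))
  rw [setLIntegral_hartogsTriangle hk ((measurable_Pker k w).norm.pow_const 2).ennreal_ofReal]
  grw [setLIntegral_mono' measurableSet_ball fun y _ ↦
    setLIntegral_norm_Pker_sq_slice_le hk hw.1 y]
  rw [lintegral_const_mul' _ _ ENNReal.ofReal_ne_top]
  grw [hdisc]
  rw [← ENNReal.ofReal_mul (by positivity)]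
  exact (congrArg ENNReal.ofReal (by ring)).le

/-- `∫_{ℍ_k} |𝒫(z,w)|² dV(z) ≤ C |w₂|⁻² (1-|w₂|²)⁻² (1-|w₁|^{2k}/|w₂|²)⁻²`. -/
theorem stmt3 (k : ℕ) (hk : 1 ≤ k) :
    ∃ C : ℝ, 0 < C ∧ ∀ w ∈ hartogsTriangle k,
      (∫ z in hartogsTriangle k, ‖Pker k z w‖ ^ 2) ≤
        C * (‖w.2‖ ^ 2)⁻¹ * ((1 - ‖w.2‖ ^ 2) ^ 2)⁻¹ *
          ((1 - ‖w.1‖ ^ (2 * k) / ‖w.2‖ ^ 2) ^ 2)⁻¹ := by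
  have hk0 : k ≠ 0 := Nat.one_le_iff_ne_zero.1 hk
  refine ⟨16 * π ^ 2 * k, by positivity, fun w hw ↦ ?_⟩
  rw [integral_eq_lintegral_of_nonneg_ae (.of_forall fun z ↦ by positivity)
    ((measurable_Pker k w).norm.pow_const 2).aestronglyMeasurable]
  exact ENNReal.toReal_le_of_le_ofReal (by positivity)
    (setLIntegral_hartogsTriangle_norm_Pker_sq_le hk0 hw)
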